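/- Main theorem: Let A be a Köthe matrix satisfying the continuity condition for the backward shift (for all n there is m > n with sup_j |a_{j,n}/a_{j+1,m}| < ∞), and let 1 ≤ p < ∞ or p = 0. If there exist x, y ∈ λ_p(A) with Φ_{x,y}(δ) = 0 for some δ > 0 (where Φ is the lower distributional function of the backward shift B with respect to the standard metric d on λ_p(A)), then for every 0 < ε < δ, B admits an uncountable invariant distributionally ε-scrambled set: an uncountable set 𝒟 ⊆ λ_p(A) with B(𝒟) ⊆ 𝒟 such that for all distinct a, b ∈ 𝒟, Φ*_{a,b}(t) = 1 for all t > 0 and Φ_{a,b}(ε) = 0. -/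

import Mathlib

open Filter Topology

noncomputable section

/-- A Köthe matrix: nonnegative entries, nondecreasing in the second index,
and for every row some positive entry. -/
def IsKotheMatrix (a : ℕ → ℕ → ℝ) : Prop :=
  (∀ j k, 0 ≤ a j k) ∧ (∀ j k, a j k ≤ a j (k + 1)) ∧ (∀ j, ∃ k, 0 < a j k)

/-- The `k`-th seminorm on the Köthe sequence space `λ_p(A)` (for `1 ≤ p < ∞`). -/
noncomputable def kSeminorm (a : ℕ → ℕ → ℝ) (p : ℝ) (x : ℕ → ℝ) (k : ℕ) : ℝ :=
  (∑' j : ℕ, |x j * a j k| ^ p) ^ (1 / p)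

/-- The Köthe sequence space `λ_p(A)` for `1 ≤ p < ∞`. -/
def lambdaP (a : ℕ → ℕ → ℝ) (p : ℝ) : Set (ℕ → ℝ) :=
  {x | ∀ k : ℕ, Summable fun j : ℕ => |x j * a j k| ^ p}

/-- The standard translation-invariant Fréchet metric on `λ_p(A)`:
`d(x,y) = ∑_{n≥1} 2^{-n} ‖x-y‖_n / (1 + ‖x-y‖_n)`. -/
noncomputable def kDist (a : ℕ → ℕ → ℝ) (p : ℝ) (x y : ℕ → ℝ) : ℝ :=
  ∑' n : ℕ, (1 / 2 : ℝ) ^ (n + 1) *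
    (kSeminorm a p (x - y) (n + 1) / (1 + kSeminorm a p (x - y) (n + 1)))

/-- The backward shift `B(x₁, x₂, x₃, …) = (x₂, x₃, x₄, …)` (0-based). -/
def bShift (x : ℕ → ℝ) : ℕ → ℝ := fun j => x (j + 1)

/-- The front truncation `x(k, n) = (x_{k+1}, …, x_{k+n}, 0, 0, …)`. -/
def frontPart (x : ℕ → ℝ) (k n : ℕ) : ℕ → ℝ := fun i => if i < n then x (k + i) else 0

/-- The tail `x[k, n] = (0, …, 0 (n zeros), x_{k+n+1}, x_{k+n+2}, …)`. -/
def tailPart (x : ℕ → ℝ) (k n : ℕ) : ℕ → ℝ := fun i => if i < n then 0 else x (k + i)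

open scoped Classical in
/-- `Φ^{(n)}_{x,y}(t) = |{0 ≤ i < n : d(f^i(x), f^i(y)) < t}|`. -/
noncomputable def PhiN {X : Type*} (d : X → X → ℝ) (f : X → X) (x y : X) (n : ℕ) (t : ℝ) : ℕ :=
  ((Finset.range n).filter fun i => d (f^[i] x) (f^[i] y) < t).card

/-- The lower distributional function `Φ_{x,y}(t)`. -/
noncomputable def PhiLow {X : Type*} (d : X → X → ℝ) (f : X → X) (x y : X) (t : ℝ) : ℝ :=
  Filter.liminf (fun n : ℕ => (PhiN d f x y n t : ℝ) / n) Filter.atTop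

/-- The upper distributional function `Φ*_{x,y}(t)`. -/
noncomputable def PhiUp {X : Type*} (d : X → X → ℝ) (f : X → X) (x y : X) (t : ℝ) : ℝ :=
  Filter.limsup (fun n : ℕ => (PhiN d f x y n t : ℝ) / n) Filter.atTop

open scoped Classical in
/-- `|{0 ≤ i < n : d(f^i(x), f^i(y)) ≥ t}|`. -/
noncomputable def PhiNge {X : Type*} (d : X → X → ℝ) (f : X → X) (x y : X) (n : ℕ) (t : ℝ) : ℕ :=
  ((Finset.range n).filter fun i => t ≤ d (f^[i] x) (f^[i] y)).card

/-- The `k`-th seminorm on `λ_0(A)`: `‖x‖_k = sup_j |x_j a_{j,k}|`. -/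
noncomputable def kSeminorm0 (a : ℕ → ℕ → ℝ) (x : ℕ → ℝ) (k : ℕ) : ℝ :=
  ⨆ j : ℕ, |x j * a j k|

/-- The Köthe sequence space `λ_0(A)`. -/
def lambda0 (a : ℕ → ℕ → ℝ) : Set (ℕ → ℝ) :=
  {x | ∀ k : ℕ, Tendsto (fun j : ℕ => x j * a j k) atTop (𝓝 0)}

/-- The seminorms of `λ_p(A)` for `1 ≤ p < ∞`, resp. of `λ_0(A)` when `p = 0`. -/
noncomputable def kSeminormG (a : ℕ → ℕ → ℝ) (p : ℝ) (x : ℕ → ℝ) (k : ℕ) : ℝ :=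
  if p = 0 then kSeminorm0 a x k else kSeminorm a p x k

/-- The space `λ_p(A)` (`1 ≤ p < ∞`), resp. `λ_0(A)` when `p = 0`. -/
def lambdaG (a : ℕ → ℕ → ℝ) (p : ℝ) : Set (ℕ → ℝ) :=
  if p = 0 then lambda0 a else lambdaP a p

/-- The standard translation-invariant metric on `λ_p(A)` resp. `λ_0(A)`. -/
noncomputable def kDistG (a : ℕ → ℕ → ℝ) (p : ℝ) (x y : ℕ → ℝ) : ℝ :=
  ∑' n : ℕ, (1 / 2 : ℝ) ^ (n + 1) *
    (kSeminormG a p (x - y) (n + 1) / (1 + kSeminormG a p (x - y) (n + 1)))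

/-! ### Basic facts on the spaces and seminorms -/

/-- truncation: keep the coordinates from `L` on -/
def tl (L : ℕ) (x : ℕ → ℝ) : ℕ → ℝ := fun j => if j < L then 0 else x j

/-- iterated shift -/
def sh (i : ℕ) (x : ℕ → ℝ) : ℕ → ℝ := fun j => x (j + i)

theorem bShift_iterate (i : ℕ) (x : ℕ → ℝ) : bShift^[i] x = sh i x := by
  induction i with
  | zero => rfl
  | succ n ih =>
    rw [Function.iterate_succ_apply', ih]
    funext j
    simp only [bShift, sh]
    congr 1
    omega

theorem abs_tl_le (L : ℕ) (x : ℕ → ℝ) (j : ℕ) : |tl L x j| ≤ |x j| := by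
  unfold tl; split_ifs <;> simp

theorem abs_mul_mono {x y c : ℝ} (h : |x| ≤ |y|) : |x * c| ≤ |y * c| := by
  rw [abs_mul, abs_mul]; exact mul_le_mul_of_nonneg_right h (abs_nonneg c)

theorem bdd0 {a : ℕ → ℕ → ℝ} {x : ℕ → ℝ} (hx : x ∈ lambda0 a) (k : ℕ) :
    BddAbove (Set.range fun j => |x j * a j k|) := by
  have h := (hx k).abs
  exact h.bddAbove_range

theorem mem_mono {a : ℕ → ℕ → ℝ} {p : ℝ} (hp : 1 ≤ p ∨ p = 0) {x y : ℕ → ℝ}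
    (hy : y ∈ lambdaG a p) (h : ∀ j, |x j| ≤ |y j|) : x ∈ lambdaG a p := by
  rcases hp with hp | rfl
  · have hp0 : p ≠ 0 := by linarith
    simp only [lambdaG, hp0, if_false] at hy ⊢
    intro k
    refine Summable.of_nonneg_of_le (fun j => by positivity) (fun j => ?_) (hy k)
    exact Real.rpow_le_rpow (abs_nonneg _) (abs_mul_mono (h j)) (by linarith)
  · simp only [lambdaG, if_true] at hy ⊢
    intro k
    refine squeeze_zero_norm (a := fun j => |y j * a j k|) (fun j => ?_) ?_
    · rw [Real.norm_eq_abs]; exact abs_mul_mono (h j)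
    · simpa using (hy k).abs

theorem semi_nonneg (a : ℕ → ℕ → ℝ) (p : ℝ) (x : ℕ → ℝ) (k : ℕ) : 0 ≤ kSeminormG a p x k := by
  unfold kSeminormG
  split_ifs
  · exact Real.iSup_nonneg fun j => abs_nonneg _
  · unfold kSeminorm
    exact Real.rpow_nonneg (tsum_nonneg fun j => by positivity) _

theorem semi_mono {a : ℕ → ℕ → ℝ} {p : ℝ} (hp : 1 ≤ p ∨ p = 0) {x y : ℕ → ℝ}
    (hy : y ∈ lambdaG a p) (h : ∀ j, |x j| ≤ |y j|) (k : ℕ) :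
    kSeminormG a p x k ≤ kSeminormG a p y k := by
  have hx := mem_mono hp hy h
  rcases hp with hp | rfl
  · have hp0 : p ≠ 0 := by linarith
    simp only [lambdaG, kSeminormG, hp0, if_false] at hy hx ⊢
    unfold kSeminorm
    refine Real.rpow_le_rpow (tsum_nonneg fun j => by positivity) ?_ (by positivity)
    refine Summable.tsum_le_tsum (fun j => ?_) (hx k) (hy k)
    exact Real.rpow_le_rpow (abs_nonneg _) (abs_mul_mono (h j)) (by linarith)
  · simp only [lambdaG, kSeminormG, if_true] at hy hx ⊢
    exact ciSup_mono (bdd0 hy k) fun j => abs_mul_mono (h j)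

theorem mem_add_semi {a : ℕ → ℕ → ℝ} {p : ℝ} (hp : 1 ≤ p ∨ p = 0) {x y : ℕ → ℝ}
    (hx : x ∈ lambdaG a p) (hy : y ∈ lambdaG a p) :
    x + y ∈ lambdaG a p ∧
      ∀ k, kSeminormG a p (x + y) k ≤ kSeminormG a p x k + kSeminormG a p y k := by
  rcases hp with hp | rfl
  · have hp0 : p ≠ 0 := by linarith
    simp only [lambdaG, kSeminormG, hp0, if_false] at hy hx ⊢
    have key := fun k => Real.Lp_add_le_tsum_of_nonneg hp (f := fun j => |x j * a j k|)
      (g := fun j => |y j * a j k|) (fun j => abs_nonneg _) (fun j => abs_nonneg _) (hx k) (hy k)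
    have le : ∀ k j, |(x + y) j * a j k| ^ p ≤ (|x j * a j k| + |y j * a j k|) ^ p := by
      intro k j
      refine Real.rpow_le_rpow (abs_nonneg _) ?_ (by linarith)
      rw [Pi.add_apply, add_mul]
      exact abs_add_le _ _
    have hm : x + y ∈ lambdaP a p := fun k =>
      Summable.of_nonneg_of_le (fun j => by positivity) (le k) (key k).1
    refine ⟨hm, fun k => le_trans ?_ (key k).2⟩
    unfold kSeminorm
    refine Real.rpow_le_rpow (tsum_nonneg fun j => by positivity) ?_ (by positivity)
    exact Summable.tsum_le_tsum (le k) (hm k) (key k).1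
  · simp only [lambdaG, kSeminormG, if_true] at hy hx ⊢
    refine ⟨fun k => ?_, fun k => ?_⟩
    · have := (hx k).add (hy k)
      simpa [add_mul] using this
    · unfold kSeminorm0
      refine ciSup_le fun j => ?_
      rw [Pi.add_apply, add_mul]
      exact (abs_add_le _ _).trans (add_le_add (le_ciSup (bdd0 hx k) j) (le_ciSup (bdd0 hy k) j))

theorem semi_tail {a : ℕ → ℕ → ℝ} {p : ℝ} (hp : 1 ≤ p ∨ p = 0) {x : ℕ → ℝ}
    (hx : x ∈ lambdaG a p) (k : ℕ) :
    Tendsto (fun L => kSeminormG a p (tl L x) k) atTop (𝓝 0) := by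
  rcases hp with hp | rfl
  · have hp0 : p ≠ 0 := by linarith
    simp only [lambdaG, kSeminormG, hp0, if_false] at hx ⊢
    unfold kSeminorm
    have h1 : Tendsto (fun L => ∑' j, |tl L x j * a j k| ^ p) atTop (𝓝 (∑' _ : ℕ, (0:ℝ))) := by
      refine tendsto_tsum_of_dominated_convergence (bound := fun j => |x j * a j k| ^ p) (hx k) ?_ ?_
      · intro j
        refine tendsto_const_nhds.congr' ?_
        filter_upwards [eventually_gt_atTop j] with L hL
        simp [tl, hL, Real.zero_rpow hp0]
      · refine Eventually.of_forall fun L j => ?_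
        rw [Real.norm_eq_abs, abs_of_nonneg (by positivity)]
        exact Real.rpow_le_rpow (abs_nonneg _) (abs_mul_mono (abs_tl_le L x j)) (by linarith)
    rw [tsum_zero] at h1
    have h2 := h1.rpow_const (p := 1 / p) (Or.inr (by positivity))
    rwa [Real.zero_rpow (by positivity)] at h2
  · simp only [lambdaG, kSeminormG, if_true] at hx ⊢
    rw [Metric.tendsto_atTop]
    intro ε hε
    obtain ⟨L0, hL0⟩ := Metric.tendsto_atTop.1 (hx k) (ε / 2) (by positivity)
    refine ⟨L0, fun L hL => ?_⟩
    have h0 : 0 ≤ kSeminorm0 a (tl L x) k := Real.iSup_nonneg fun j => abs_nonneg _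
    rw [Real.dist_eq, sub_zero, abs_of_nonneg h0]
    refine lt_of_le_of_lt (b := ε / 2) (ciSup_le fun j => ?_) (by linarith)
    unfold tl
    split_ifs with h
    · simp; positivity
    · have := hL0 j (by omega)
      rw [Real.dist_eq, sub_zero] at this
      exact this.le

theorem mem_shift {a : ℕ → ℕ → ℝ} {p : ℝ} (hA : IsKotheMatrix a) (hp : 1 ≤ p ∨ p = 0)
    (hcont : ∀ n : ℕ, ∃ m : ℕ, n < m ∧ ∃ C : ℝ, ∀ j : ℕ, a j n ≤ C * a (j + 1) m)
    {x : ℕ → ℝ} (hx : x ∈ lambdaG a p) : sh 1 x ∈ lambdaG a p := by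
  have le : ∀ n : ℕ, ∃ m : ℕ, ∃ C : ℝ, 0 ≤ C ∧
      ∀ j, |sh 1 x j * a j n| ≤ C * |x (j + 1) * a (j + 1) m| := by
    intro n
    obtain ⟨m, -, C, hC⟩ := hcont n
    refine ⟨m, |C|, abs_nonneg C, fun j => ?_⟩
    have h1 : |a j n| ≤ |C| * |a (j + 1) m| := by
      rw [← abs_mul, abs_of_nonneg (hA.1 j n)]
      exact (hC j).trans (le_abs_self _)
    rw [sh, abs_mul, abs_mul]
    calc _ ≤ |x (j + 1)| * (|C| * |a (j + 1) m|) :=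
          mul_le_mul_of_nonneg_left h1 (abs_nonneg _)
      _ = _ := by ring
  rcases hp with hp | rfl
  · have hp0 : p ≠ 0 := by linarith
    simp only [lambdaG, hp0, if_false] at hx ⊢
    intro n
    obtain ⟨m, C, hC0, hC⟩ := le n
    have hs := ((summable_nat_add_iff 1).2 (hx m)).mul_left (C ^ p)
    refine Summable.of_nonneg_of_le (fun j => by positivity) (fun j => ?_) hs
    rw [← Real.mul_rpow hC0 (abs_nonneg _)]
    exact Real.rpow_le_rpow (abs_nonneg _) (hC j) (by linarith)
  · simp only [lambdaG, if_true] at hx ⊢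
    intro n
    obtain ⟨m, C, hC0, hC⟩ := le n
    refine squeeze_zero_norm hC ?_
    have := ((tendsto_add_atTop_iff_nat 1).2 (hx m)).abs.const_mul C
    simpa using this

theorem mem_sh {a : ℕ → ℕ → ℝ} {p : ℝ} (hA : IsKotheMatrix a) (hp : 1 ≤ p ∨ p = 0)
    (hcont : ∀ n : ℕ, ∃ m : ℕ, n < m ∧ ∃ C : ℝ, ∀ j : ℕ, a j n ≤ C * a (j + 1) m)
    {x : ℕ → ℝ} (hx : x ∈ lambdaG a p) (i : ℕ) : sh i x ∈ lambdaG a p := by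
  induction i with
  | zero => exact hx
  | succ n ih =>
    have := mem_shift hA hp hcont ih
    have e : sh (n + 1) x = sh 1 (sh n x) := by
      funext j; simp only [sh]; congr 1; omega
    rwa [e]

/-! ### Slowly growing multipliers -/

theorem exists_slow (Q : ℕ → ℕ → ℕ) (hQ : ∀ k, Tendsto (Q k) atTop atTop) :
    ∃ q : ℕ → ℕ, Tendsto q atTop atTop ∧ ∀ k, ∀ᶠ j in atTop, q j ≤ Q k j := by
  classical
  let P : ℕ → ℕ → Prop := fun j r => ∀ k ≤ r, r ≤ Q k j
  let q : ℕ → ℕ := fun j => Nat.findGreatest (P j) j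
  have hq : Tendsto q atTop atTop := by
    rw [tendsto_atTop]
    intro r
    have h1 : ∀ᶠ j in atTop, ∀ k ∈ Finset.range (r + 1), r ≤ Q k j :=
      (Finset.eventually_all _).2 fun k _ => (hQ k).eventually_ge_atTop r
    filter_upwards [h1, eventually_ge_atTop r] with j hj hr
    exact Nat.le_findGreatest hr fun k hk => hj k (Finset.mem_range.2 (by omega))
  refine ⟨q, hq, fun k => ?_⟩
  filter_upwards [hq.eventually_ge_atTop k] with j hj
  have : P j (q j) := by
    by_cases h0 : q j = 0
    · rw [h0]; intro k _; exact Nat.zero_le _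
    · exact Nat.findGreatest_of_ne_zero rfl h0
  exact this k hj

theorem slow_summable (f : ℕ → ℝ) (hf0 : ∀ j, 0 ≤ f j) (hf : Summable f) :
    ∃ Q : ℕ → ℝ, (∀ j, 0 ≤ Q j) ∧ Tendsto Q atTop atTop ∧ Summable fun j => Q j * f j := by
  let g : ℕ → ℝ := fun j => f j + (1 / 2) ^ j
  have hg : Summable g := hf.add summable_geometric_two
  have hgpos : ∀ j, 0 < g j := fun j => add_pos_of_nonneg_of_pos (hf0 j) (by positivity)
  let R : ℕ → ℝ := fun j => ∑' i, g (i + j)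
  have hRs : ∀ j, R j = g j + R (j + 1) := by
    intro j
    have := ((summable_nat_add_iff j).2 hg).tsum_eq_zero_add
    simp only [R, this, zero_add]
    congr 1
    refine tsum_congr fun i => ?_
    congr 1; omega
  have hR0 : ∀ j, 0 ≤ R j := fun j => tsum_nonneg fun i => (hgpos _).le
  have hRpos : ∀ j, 0 < R j := fun j => by rw [hRs]; linarith [hgpos j, hR0 (j+1)]
  have hRt : Tendsto R atTop (𝓝 0) := tendsto_sum_nat_add g
  refine ⟨fun j => (√(R j))⁻¹, fun j => by positivity, ?_, ?_⟩
  · refine Tendsto.inv_tendsto_nhdsGT_zero ?_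
    refine tendsto_nhdsWithin_iff.2 ⟨?_, Eventually.of_forall fun j => Real.sqrt_pos.2 (hRpos j)⟩
    simpa using hRt.sqrt
  · refine summable_of_sum_range_le (c := 2 * √(R 0))
      (fun j => mul_nonneg (by positivity) (hf0 j)) fun n => ?_
    have hle : ∀ j, (√(R j))⁻¹ * f j ≤ 2 * √(R j) - 2 * √(R (j+1)) := by
      intro j
      have s1 := Real.sqrt_pos.2 (hRpos j)
      have e1 := Real.sq_sqrt (hR0 j)
      have e2 := Real.sq_sqrt (hR0 (j+1))
      have hfg : f j ≤ g j := by simp only [g]; linarith [show (0:ℝ) ≤ (1/2)^j by positivity]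
      rw [inv_mul_le_iff₀ s1]
      have := hRs j
      nlinarith [sq_nonneg (√(R j) - √(R (j+1)))]
    calc _ ≤ ∑ j ∈ Finset.range n, (2 * √(R j) - 2 * √(R (j+1))) :=
          Finset.sum_le_sum fun j _ => hle j
      _ = 2 * √(R 0) - 2 * √(R n) := Finset.sum_range_sub' (fun j => 2 * √(R j)) n
      _ ≤ _ := by linarith [Real.sqrt_nonneg (R n)]

theorem slow_zero (f : ℕ → ℝ) (hf : Tendsto f atTop (𝓝 0)) :
    ∃ Q : ℕ → ℕ, Tendsto Q atTop atTop ∧ Tendsto (fun j => (Q j : ℝ) * f j) atTop (𝓝 0) := by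
  classical
  let P : ℕ → ℕ → Prop := fun j r => (r : ℝ) ^ 2 * |f j| ≤ 1
  let q : ℕ → ℕ := fun j => Nat.findGreatest (P j) j
  have hq : Tendsto q atTop atTop := by
    rw [tendsto_atTop]
    intro r
    have h1 : Tendsto (fun j => (r : ℝ) ^ 2 * |f j|) atTop (𝓝 0) := by
      simpa using hf.abs.const_mul ((r:ℝ)^2)
    filter_upwards [h1.eventually_le_const zero_lt_one, eventually_ge_atTop r] with j hj hr
    exact Nat.le_findGreatest hr hj
  refine ⟨q, hq, ?_⟩
  have hinv : Tendsto (fun j => ((q j : ℝ))⁻¹) atTop (𝓝 0) :=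
    tendsto_inv_atTop_zero.comp (tendsto_natCast_atTop_atTop.comp hq)
  refine squeeze_zero_norm' ?_ hinv
  filter_upwards [hq.eventually_ge_atTop 1] with j hj
  have hP : P j (q j) := Nat.findGreatest_of_ne_zero rfl (by omega)
  have hpos : (0:ℝ) < q j := by exact_mod_cast hj
  simp only [P] at hP
  rw [Real.norm_eq_abs, abs_mul, abs_of_pos hpos, ← one_div, le_div_iff₀ hpos]
  nlinarith

theorem exists_mult {a : ℕ → ℕ → ℝ} {p : ℝ} (hp : 1 ≤ p ∨ p = 0) {z : ℕ → ℝ}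
    (hz : z ∈ lambdaG a p) :
    ∃ q : ℕ → ℕ, Tendsto q atTop atTop ∧
      (fun j => (2 * (q j : ℝ) + 2) * z j) ∈ lambdaG a p := by
  rcases hp with hp | rfl
  · have hp0 : p ≠ 0 := by linarith
    have hp1 : 0 < p := by linarith
    simp only [lambdaG, hp0, if_false] at hz ⊢
    choose Q hQ0 hQt hQs using fun k =>
      slow_summable (fun j => |z j * a j k| ^ p) (fun j => by positivity) (hz k)
    obtain ⟨q, hq, hqQ⟩ := exists_slow (fun k j => ⌊(Q k j) ^ (1/p)⌋₊) (fun k =>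
      tendsto_nat_floor_atTop.comp ((tendsto_rpow_atTop (by positivity)).comp (hQt k)))
    refine ⟨q, hq, fun k => ?_⟩
    have hs := (hQs k).mul_left ((4:ℝ) ^ p)
    refine Summable.of_norm_bounded_eventually_nat hs ?_
    filter_upwards [hqQ k, hq.eventually_ge_atTop 1] with j hj h1
    have h1' : (1:ℝ) ≤ q j := by exact_mod_cast h1
    have h2 : (q j : ℝ) ≤ (Q k j) ^ (1/p) :=
      (Nat.le_floor_iff (Real.rpow_nonneg (hQ0 k j) _)).1 hj
    have h3 : (q j : ℝ) ^ p ≤ Q k j := by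
      calc _ ≤ ((Q k j) ^ (1/p)) ^ p := Real.rpow_le_rpow (by positivity) h2 hp1.le
        _ = _ := by rw [← Real.rpow_mul (hQ0 k j), one_div_mul_cancel hp0, Real.rpow_one]
    rw [Real.norm_eq_abs, abs_of_nonneg (by positivity), mul_assoc, abs_mul,
      Real.mul_rpow (abs_nonneg _) (abs_nonneg _), ← mul_assoc]
    refine mul_le_mul_of_nonneg_right ?_ (by positivity)
    calc |2 * (q j : ℝ) + 2| ^ p ≤ (4 * q j) ^ p := by
          refine Real.rpow_le_rpow (abs_nonneg _) ?_ hp1.le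
          rw [abs_of_nonneg (by positivity)]; linarith
      _ = 4 ^ p * (q j : ℝ) ^ p := Real.mul_rpow (by norm_num) (by positivity)
      _ ≤ _ := mul_le_mul_of_nonneg_left h3 (by positivity)
  · simp only [lambdaG, if_true] at hz ⊢
    choose Q hQt hQs using fun k => slow_zero (fun j => z j * a j k) (hz k)
    obtain ⟨q, hq, hqQ⟩ := exists_slow Q hQt
    refine ⟨q, hq, fun k => ?_⟩
    have hs : Tendsto (fun j => 4 * |(Q k j : ℝ) * (z j * a j k)|) atTop (𝓝 0) := by
      simpa using (hQs k).abs.const_mul 4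
    refine squeeze_zero_norm' ?_ hs
    filter_upwards [hqQ k, hq.eventually_ge_atTop 1] with j hj h1
    have h1' : (1:ℝ) ≤ q j := by exact_mod_cast h1
    have h2 : (q j : ℝ) ≤ Q k j := by exact_mod_cast hj
    rw [Real.norm_eq_abs, mul_assoc, abs_mul (2 * (q j : ℝ) + 2), abs_mul (Q k j : ℝ), ← mul_assoc]
    refine mul_le_mul_of_nonneg_right ?_ (abs_nonneg _)
    rw [abs_of_nonneg (show (0:ℝ) ≤ 2 * (q j : ℝ) + 2 by positivity),
      abs_of_nonneg (show (0:ℝ) ≤ (Q k j : ℝ) by positivity)]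
    linarith

/-! ### The F-norm -/

/-- the F-norm associated with the metric -/
def FF (a : ℕ → ℕ → ℝ) (p : ℝ) (x : ℕ → ℝ) : ℝ :=
  ∑' n : ℕ, (1 / 2 : ℝ) ^ (n + 1) * (kSeminormG a p x (n + 1) / (1 + kSeminormG a p x (n + 1)))

theorem kDistG_eq (a : ℕ → ℕ → ℝ) (p : ℝ) (x y : ℕ → ℝ) : kDistG a p x y = FF a p (x - y) := rfl

theorem geo_summable : Summable fun n : ℕ => (1 / 2 : ℝ) ^ (n + 1) :=
  (summable_nat_add_iff 1).2 summable_geometric_two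

theorem frac_bounds {s : ℝ} (hs : 0 ≤ s) : 0 ≤ s / (1 + s) ∧ s / (1 + s) ≤ 1 :=
  ⟨by positivity, by rw [div_le_one (by positivity)]; linarith⟩

theorem frac_mono {s t : ℝ} (hs : 0 ≤ s) (h : s ≤ t) : s / (1 + s) ≤ t / (1 + t) := by
  rw [div_le_div_iff₀ (by linarith) (by linarith)]; nlinarith

theorem frac_add {s t : ℝ} (hs : 0 ≤ s) (ht : 0 ≤ t) :
    (s + t) / (1 + (s + t)) ≤ s / (1 + s) + t / (1 + t) := by
  rw [add_div]
  exact add_le_add (div_le_div_of_nonneg_left hs (by linarith) (by linarith))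
    (div_le_div_of_nonneg_left ht (by linarith) (by linarith))

theorem FF_summable (a : ℕ → ℕ → ℝ) (p : ℝ) (x : ℕ → ℝ) :
    Summable fun n : ℕ => (1 / 2 : ℝ) ^ (n + 1) *
      (kSeminormG a p x (n + 1) / (1 + kSeminormG a p x (n + 1))) := by
  refine Summable.of_nonneg_of_le (fun n => ?_) (fun n => ?_) geo_summable
  · exact mul_nonneg (by positivity) (frac_bounds (semi_nonneg a p x _)).1
  · exact mul_le_of_le_one_right (by positivity) (frac_bounds (semi_nonneg a p x _)).2

theorem FF_mono {a : ℕ → ℕ → ℝ} {p : ℝ} (hp : 1 ≤ p ∨ p = 0) {x y : ℕ → ℝ}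
    (hy : y ∈ lambdaG a p) (h : ∀ j, |x j| ≤ |y j|) : FF a p x ≤ FF a p y := by
  refine Summable.tsum_le_tsum (fun n => ?_) (FF_summable a p x) (FF_summable a p y)
  exact mul_le_mul_of_nonneg_left (frac_mono (semi_nonneg a p x _) (semi_mono hp hy h _))
    (by positivity)

theorem FF_add {a : ℕ → ℕ → ℝ} {p : ℝ} (hp : 1 ≤ p ∨ p = 0) {x y : ℕ → ℝ}
    (hx : x ∈ lambdaG a p) (hy : y ∈ lambdaG a p) : FF a p (x + y) ≤ FF a p x + FF a p y := by
  unfold FF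
  rw [← (FF_summable a p x).tsum_add (FF_summable a p y)]
  refine Summable.tsum_le_tsum (fun n => ?_) (FF_summable a p (x + y))
    ((FF_summable a p x).add (FF_summable a p y))
  rw [← mul_add]
  refine mul_le_mul_of_nonneg_left ?_ (by positivity)
  exact (frac_mono (semi_nonneg a p _ _) ((mem_add_semi hp hx hy).2 _)).trans
    (frac_add (semi_nonneg a p x _) (semi_nonneg a p y _))

theorem FF_tail {a : ℕ → ℕ → ℝ} {p : ℝ} (hp : 1 ≤ p ∨ p = 0) {x : ℕ → ℝ}
    (hx : x ∈ lambdaG a p) : Tendsto (fun L => FF a p (tl L x)) atTop (𝓝 0) := by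
  have h1 : Tendsto (fun L => FF a p (tl L x)) atTop (𝓝 (∑' _ : ℕ, (0:ℝ))) := by
    refine tendsto_tsum_of_dominated_convergence geo_summable ?_ ?_
    · intro n
      have h := semi_tail hp hx (n + 1)
      have h2 := (h.div (h.const_add 1) (by norm_num)).const_mul ((1 / 2 : ℝ) ^ (n + 1))
      simpa using h2
    · refine Eventually.of_forall fun L n => ?_
      have hb := frac_bounds (semi_nonneg a p (tl L x) (n + 1))
      rw [Real.norm_eq_abs, abs_of_nonneg (mul_nonneg (by positivity) hb.1)]
      exact mul_le_of_le_one_right (by positivity) hb.2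
  rwa [tsum_zero] at h1

theorem FF_zero {a : ℕ → ℕ → ℝ} {p : ℝ} (hp : 1 ≤ p ∨ p = 0) {x : ℕ → ℝ}
    (hx : x ∈ lambdaG a p) : FF a p 0 = 0 := by
  have h0 : (0 : ℕ → ℝ) ∈ lambdaG a p := mem_mono hp hx (fun j => by simp)
  have h := FF_tail hp h0
  have e : ∀ L, tl L 0 = 0 := fun L => by funext j; simp [tl]
  simp only [e] at h
  exact tendsto_nhds_unique tendsto_const_nhds h

theorem FF_comm {a : ℕ → ℕ → ℝ} {p : ℝ} (hp : 1 ≤ p ∨ p = 0) {x y : ℕ → ℝ}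
    (h : x - y ∈ lambdaG a p) : FF a p (x - y) = FF a p (y - x) := by
  have h2 : y - x ∈ lambdaG a p := mem_mono hp h (fun j => by simp [abs_sub_comm])
  exact le_antisymm (FF_mono hp h2 fun j => by simp [abs_sub_comm])
    (FF_mono hp h fun j => by simp [abs_sub_comm])

/-! ### The greedy multiplier -/

theorem pick (q : ℕ) (z : ℝ) (y : ℕ → ℝ) :
    ∃ c : ℕ, c ≤ q ∧ ∀ l < q, |z| ≤ |2 * ((c : ℝ) + 1) * z - y l| := by
  by_contra hcon
  push Not at hcon
  choose! l hl hlt using hcon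
  obtain ⟨c, hc, d, hd, hne, heq⟩ := Finset.exists_ne_map_eq_of_card_lt_of_maps_to
    (s := Finset.range (q + 1)) (t := Finset.range q) (f := l) (by simp)
    (fun c hc => by
      have : c ≤ q := by have := Finset.mem_range.1 hc; omega
      simpa using hl c this)
  have hc' : c ≤ q := by have := Finset.mem_range.1 hc; omega
  have hd' : d ≤ q := by have := Finset.mem_range.1 hd; omega
  have h1 := hlt c hc'
  have h2 := hlt d hd'
  rw [heq] at h1
  have h3 : |2 * ((c : ℝ) - d) * z| < 2 * |z| := by
    have e : 2 * ((c : ℝ) - d) * z =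
        (2 * ((c : ℝ) + 1) * z - y (l d)) - (2 * ((d : ℝ) + 1) * z - y (l d)) := by ring
    rw [e]
    exact (abs_sub _ _).trans_lt (by linarith)
  have h4 : (1:ℝ) ≤ |(c : ℝ) - d| := by
    have : (1:ℤ) ≤ |(c : ℤ) - d| := Int.one_le_abs (by omega)
    exact_mod_cast this
  rw [abs_mul, abs_mul, abs_two] at h3
  nlinarith [abs_nonneg z]

/-- the greedily modified vector -/
def gw (z : ℕ → ℝ) (q : ℕ → ℕ) (j : ℕ) : ℝ :=
  2 * (((Classical.choose (pick (q j) (z j)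
      (fun l => if h : l < j then gw z q (j - 1 - l) else 0)) : ℕ) : ℝ) + 1) * z j
termination_by j
decreasing_by all_goals omega

theorem gw_spec (z : ℕ → ℝ) (q : ℕ → ℕ) (j : ℕ) :
    (∃ c : ℕ, c ≤ q j ∧ gw z q j = 2 * ((c : ℝ) + 1) * z j) ∧
      ∀ l, 1 ≤ l → l ≤ q j → l ≤ j → |z j| ≤ |gw z q j - gw z q (j - l)| := by
  have h := Classical.choose_spec (pick (q j) (z j)
      (fun l => if h : l < j then gw z q (j - 1 - l) else 0))
  have e : gw z q j = 2 * (((Classical.choose (pick (q j) (z j)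
      (fun l => if h : l < j then gw z q (j - 1 - l) else 0)) : ℕ) : ℝ) + 1) * z j := by
    rw [gw]
  rw [← e] at h
  refine ⟨⟨_, h.1, e⟩, fun l h1 h2 h3 => ?_⟩
  have := h.2 (l - 1) (by omega)
  rw [dif_pos (by omega)] at this
  rwa [show j - 1 - (l - 1) = j - l by omega] at this

theorem gw_ge (z : ℕ → ℝ) (q : ℕ → ℕ) (j : ℕ) : |z j| ≤ |gw z q j| := by
  obtain ⟨c, -, hc⟩ := (gw_spec z q j).1
  rw [hc, abs_mul, abs_of_nonneg (by positivity : (0:ℝ) ≤ 2 * ((c:ℝ) + 1))]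
  nlinarith [abs_nonneg (z j), mul_nonneg (Nat.cast_nonneg (α := ℝ) c) (abs_nonneg (z j))]

theorem gw_le (z : ℕ → ℝ) (q : ℕ → ℕ) (j : ℕ) :
    |gw z q j| ≤ |(2 * (q j : ℝ) + 2) * z j| := by
  obtain ⟨c, h, hc⟩ := (gw_spec z q j).1
  have h' : (c : ℝ) ≤ q j := by exact_mod_cast h
  rw [hc]
  refine abs_mul_mono ?_
  rw [abs_of_nonneg (by positivity), abs_of_nonneg (by positivity)]
  linarith

/-! ### Distribution functions -/

theorem Phi_le_one {X : Type*} (d : X → X → ℝ) (f : X → X) (x y : X) (n : ℕ) (t : ℝ) :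
    (PhiN d f x y n t : ℝ) / n ≤ 1 := by
  refine div_le_one_of_le₀ ?_ (by positivity)
  have : PhiN d f x y n t ≤ n := by
    unfold PhiN
    exact (Finset.card_filter_le _ _).trans (by simp)
  exact_mod_cast this

theorem Phi_nonneg {X : Type*} (d : X → X → ℝ) (f : X → X) (x y : X) (n : ℕ) (t : ℝ) :
    0 ≤ (PhiN d f x y n t : ℝ) / n := by positivity

theorem Phi_bdd_above {X : Type*} (d : X → X → ℝ) (f : X → X) (x y : X) (t : ℝ) :
    IsBoundedUnder (· ≤ ·) atTop (fun n : ℕ => (PhiN d f x y n t : ℝ) / n) :=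
  isBoundedUnder_of ⟨1, fun n => Phi_le_one d f x y n t⟩

theorem Phi_bdd_below {X : Type*} (d : X → X → ℝ) (f : X → X) (x y : X) (t : ℝ) :
    IsBoundedUnder (· ≥ ·) atTop (fun n : ℕ => (PhiN d f x y n t : ℝ) / n) :=
  isBoundedUnder_of ⟨0, fun n => Phi_nonneg d f x y n t⟩

theorem PhiUp_eq_one {X : Type*} (d : X → X → ℝ) (f : X → X) (x y : X) (t : ℝ)
    (h : ∀ η > 0, ∃ᶠ n : ℕ in atTop, 1 - η ≤ (PhiN d f x y n t : ℝ) / n) :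
    PhiUp d f x y t = 1 := by
  refine le_antisymm ?_ ?_
  · exact limsup_le_of_le (Phi_bdd_below d f x y t).isCoboundedUnder_le
      (Eventually.of_forall fun n => Phi_le_one d f x y n t)
  · refine le_of_forall_sub_le fun η hη => ?_
    exact le_limsup_of_frequently_le (h η hη) (Phi_bdd_above d f x y t)

theorem PhiLow_eq_zero {X : Type*} (d : X → X → ℝ) (f : X → X) (x y : X) (t : ℝ)
    (h : ∀ η > 0, ∃ᶠ n : ℕ in atTop, (PhiN d f x y n t : ℝ) / n ≤ η) :
    PhiLow d f x y t = 0 := by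
  refine le_antisymm ?_ ?_
  · refine le_of_forall_pos_le_add fun η hη => ?_
    rw [zero_add]
    exact liminf_le_of_frequently_le (h η hη) (Phi_bdd_below d f x y t)
  · exact le_liminf_of_le (Phi_bdd_above d f x y t).isCoboundedUnder_ge
      (Eventually.of_forall fun n => Phi_nonneg d f x y n t)

theorem Phi_freq_of_low {X : Type*} (d : X → X → ℝ) (f : X → X) (x y : X) (t : ℝ)
    (h : PhiLow d f x y t = 0) (η : ℝ) (hη : 0 < η) :
    ∃ᶠ n : ℕ in atTop, (PhiN d f x y n t : ℝ) / n < η :=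
  frequently_lt_of_liminf_lt (Phi_bdd_above d f x y t).isCoboundedUnder_ge
    (show PhiLow d f x y t < η by rw [h]; exact hη)

open scoped Classical in
/-- number of times `i < n` with small F-norm -/
def cnt (a : ℕ → ℕ → ℝ) (p : ℝ) (e : ℕ → ℝ) (n : ℕ) (t : ℝ) : ℕ :=
  ((Finset.range n).filter fun i => FF a p (sh i e) < t).card

theorem PhiN_eq (a : ℕ → ℕ → ℝ) (p : ℝ) (u v : ℕ → ℝ) (n : ℕ) (t : ℝ) :
    PhiN (kDistG a p) bShift u v n t = cnt a p (u - v) n t := by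
  unfold PhiN cnt
  congr 1
  ext i
  simp only [bShift_iterate, kDistG_eq]
  rfl

/-! ### The block structure -/

theorem build_seq {a : ℕ → ℕ → ℝ} {p : ℝ} (hp : 1 ≤ p ∨ p = 0) (z w : ℕ → ℝ)
    (hw : ∀ i, sh i w ∈ lambdaG a p) (δ : ℝ)
    (hz : ∀ η > 0, ∃ᶠ n : ℕ in atTop, (cnt a p z n δ : ℝ) / n < η) :
    ∃ L M : ℕ → ℕ, L 0 = 0 ∧ StrictMono L ∧ ∀ k, (k + 1) * (L k + k + 1) ≤ M k ∧
      (cnt a p z (M k) δ : ℝ) / M k < 1 / (k + 1) ∧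
      ∀ i < M k, ∀ r ≤ k, FF a p (tl (L (k + 1) - k - i) (sh (i + r) w)) < 1 / (k + 1) := by
  have step : ∀ k l : ℕ, ∃ M l' : ℕ, l < l' ∧ (k + 1) * (l + k + 1) ≤ M ∧
      (cnt a p z M δ : ℝ) / M < 1 / (k + 1) ∧
      ∀ i < M, ∀ r ≤ k, FF a p (tl (l' - k - i) (sh (i + r) w)) < 1 / (k + 1) := by
    intro k l
    obtain ⟨M, hM1, hM2⟩ := ((hz (1 / (k + 1)) (by positivity)).and_eventually
      (eventually_ge_atTop ((k + 1) * (l + k + 1)))).exists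
    have hev : ∀ᶠ l' in atTop, ∀ i ∈ Finset.range M, ∀ r ∈ Finset.range (k + 1),
        FF a p (tl (l' - k - i) (sh (i + r) w)) < 1 / (k + 1) := by
      refine (Finset.eventually_all _).2 fun i _ => (Finset.eventually_all _).2 fun r _ => ?_
      have h1 : Tendsto (fun l' : ℕ => l' - k - i) atTop atTop :=
        (tendsto_sub_atTop_nat i).comp (tendsto_sub_atTop_nat k)
      have h2 := (FF_tail hp (hw (i + r))).comp h1
      exact h2.eventually_lt_const (by positivity)
    obtain ⟨l', h1, h2⟩ := (hev.and (eventually_gt_atTop l)).exists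
    exact ⟨M, l', h2, hM2, hM1, fun i hi r hr =>
      h1 i (Finset.mem_range.2 hi) r (Finset.mem_range.2 (by omega))⟩
  choose Mf Lf h1 h2 h3 h4 using step
  let L : ℕ → ℕ := fun k => Nat.rec 0 (fun k l => Lf k l) k
  refine ⟨L, fun k => Mf k (L k), rfl, strictMono_nat_of_lt_succ fun k => h1 k (L k), fun k =>
    ⟨h2 k (L k), h3 k (L k), h4 k (L k)⟩⟩

/-- block index -/
def kap (L : ℕ → ℕ) (j : ℕ) : ℕ := Nat.findGreatest (fun k => L k ≤ j) j

theorem kap_eq {L : ℕ → ℕ} (hL : StrictMono L) {j k : ℕ} (h1 : L k ≤ j) (h2 : j < L (k + 1)) :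
    kap L j = k := by
  unfold kap
  rw [Nat.findGreatest_eq_iff]
  refine ⟨(hL.id_le k).trans h1, fun _ => h1, fun n hn _ h => ?_⟩
  have : L (k + 1) ≤ L n := hL.monotone hn
  omega

theorem M_tendsto (L M : ℕ → ℕ)
    (hM : ∀ k, (k + 1) * (L k + k + 1) ≤ M k) : Tendsto M atTop atTop := by
  refine tendsto_atTop_mono (fun k => ?_) tendsto_id
  have := hM k
  simp only [id]
  nlinarith

theorem up_lemma {a : ℕ → ℕ → ℝ} {p : ℝ} (hp : 1 ≤ p ∨ p = 0) (w : ℕ → ℝ)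
    (hw : ∀ i, sh i w ∈ lambdaG a p) (L M : ℕ → ℕ)
    (hM : ∀ k, (k + 1) * (L k + k + 1) ≤ M k)
    (hT : ∀ k, ∀ i < M k, ∀ r ≤ k, FF a p (tl (L (k + 1) - k - i) (sh (i + r) w)) < 1 / (k + 1))
    (e : ℕ → ℝ) (m n : ℕ) (he : ∀ j, |e j| ≤ |w (j + m)| + |w (j + n)|)
    (hfr : ∃ᶠ k in atTop, ∀ j, L k ≤ j → j + k < L (k + 1) → e j = 0) (t : ℝ) (ht : 0 < t)
    (η : ℝ) (hη : 0 < η) : ∃ᶠ N : ℕ in atTop, 1 - η ≤ (cnt a p e N t : ℝ) / N := by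
  have hlim : Tendsto (fun k : ℕ => 1 / ((k : ℝ) + 1)) atTop (𝓝 0) :=
    tendsto_one_div_add_atTop_nhds_zero_nat
  refine (M_tendsto L M hM).frequently (p := fun N => 1 - η ≤ (cnt a p e N t : ℝ) / N) ?_
  refine (hfr.and_eventually ((eventually_ge_atTop m).and ((eventually_ge_atTop n).and
    ((hlim.eventually_lt_const (half_pos ht)).and (hlim.eventually_lt_const hη))))).mono ?_
  rintro k ⟨hk, hm, hn, hkt, hkη⟩
  have hsmall : ∀ i, L k ≤ i → i < M k → FF a p (sh i e) < t := by
    intro i hi1 hi2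
    set l := L (k + 1) - k - i with hl
    have memt : ∀ r, tl l (sh (i + r) w) ∈ lambdaG a p := fun r =>
      mem_mono hp (hw (i + r)) (abs_tl_le l _)
    have mema : ∀ r, (fun j => |tl l (sh (i + r) w) j|) ∈ lambdaG a p := fun r =>
      mem_mono hp (hw (i + r)) (fun j => by rw [abs_abs]; exact abs_tl_le l _ j)
    have h1 : FF a p (sh i e) ≤ FF a p ((fun j => |tl l (sh (i + m) w) j|) +
        fun j => |tl l (sh (i + n) w) j|) := by
      refine FF_mono hp (mem_add_semi hp (mema m) (mema n)).1 fun j => ?_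
      rw [Pi.add_apply, abs_of_nonneg (by positivity :
        0 ≤ |tl l (sh (i + m) w) j| + |tl l (sh (i + n) w) j|)]
      by_cases hj : j < l
      · have : sh i e j = 0 := hk (j + i) (by omega) (by omega)
        rw [this, abs_zero]; positivity
      · simp only [tl, hj, if_false, sh]
        rw [← add_assoc, ← add_assoc]
        exact he (j + i)
    have h2 := FF_add hp (mema m) (mema n)
    have h3 : ∀ r ≤ k, FF a p (fun j => |tl l (sh (i + r) w) j|) < 1 / (k + 1) := fun r hr =>
      (FF_mono hp (memt r) (fun j => by rw [abs_abs])).trans_lt (hT k i hi2 r hr)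
    have h4 := h3 m hm
    have h5 := h3 n hn
    linarith
  have hc : M k - L k ≤ cnt a p e (M k) t := by
    unfold cnt
    rw [← Nat.card_Ico]
    refine Finset.card_le_card fun i hi => ?_
    rw [Finset.mem_Ico] at hi
    rw [Finset.mem_filter, Finset.mem_range]
    exact ⟨hi.2, hsmall i hi.1 hi.2⟩
  have hMk := hM k
  have hMR : ((k:ℝ) + 1) * (L k + k + 1) ≤ M k := by exact_mod_cast hMk
  have hMpos : (0:ℝ) < M k := lt_of_lt_of_le (by positivity) hMR
  have hcR : (M k : ℝ) ≤ cnt a p e (M k) t + L k := by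
    have : M k ≤ cnt a p e (M k) t + L k := by omega
    exact_mod_cast this
  rw [le_div_iff₀ hMpos]
  have hLM : (L k : ℝ) ≤ (1 / ((k:ℝ) + 1)) * M k := by
    rw [one_div, ← div_eq_inv_mul, le_div_iff₀ (by positivity)]
    nlinarith [Nat.cast_nonneg (α := ℝ) k]
  have : (1 / ((k:ℝ) + 1)) * M k ≤ η * M k := mul_le_mul_of_nonneg_right hkη.le hMpos.le
  linarith

theorem low_lemma {a : ℕ → ℕ → ℝ} {p : ℝ} (hp : 1 ≤ p ∨ p = 0)
    (z : ℕ → ℝ) (w : ℕ → ℝ)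
    (hw : ∀ i, sh i w ∈ lambdaG a p) (δ : ℝ) (L M : ℕ → ℕ)
    (hM : ∀ k, (k + 1) * (L k + k + 1) ≤ M k)
    (hz : ∀ k, (cnt a p z (M k) δ : ℝ) / M k < 1 / (k + 1))
    (hT : ∀ k, ∀ i < M k, ∀ r ≤ k, FF a p (tl (L (k + 1) - k - i) (sh (i + r) w)) < 1 / (k + 1))
    (hzw : ∀ j, |z j| ≤ |w j|) (e : ℕ → ℝ) (he : ∀ i, sh i e ∈ lambdaG a p) (r : ℕ)
    (hfr : ∃ᶠ k in atTop, ∀ j, L k ≤ j → j + k < L (k + 1) → |z (j + r)| ≤ |e j|)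
    (ε : ℝ) (hε : ε < δ)
    (η : ℝ) (hη : 0 < η) : ∃ᶠ N : ℕ in atTop, (cnt a p e N ε : ℝ) / N ≤ η := by
  have hlim : Tendsto (fun k : ℕ => 1 / ((k : ℝ) + 1)) atTop (𝓝 0) :=
    tendsto_one_div_add_atTop_nhds_zero_nat
  refine (M_tendsto L M hM).frequently (p := fun N => (cnt a p e N ε : ℝ) / N ≤ η) ?_
  refine (hfr.and_eventually ((eventually_ge_atTop r).and
    ((hlim.eventually_lt_const (sub_pos.2 hε)).and
      (hlim.eventually_lt_const (half_pos hη))))).mono ?_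
  rintro k ⟨hk, hr, hkt, hkη⟩
  have hbig : ∀ i, L k ≤ i → i < M k → FF a p (sh i e) < ε → FF a p (sh (i + r) z) < δ := by
    intro i hi1 hi2 hlt
    set l := L (k + 1) - k - i with hl
    have memt : tl l (sh (i + r) w) ∈ lambdaG a p := mem_mono hp (hw (i + r)) (abs_tl_le l _)
    have mema : (fun j => |tl l (sh (i + r) w) j|) ∈ lambdaG a p :=
      mem_mono hp (hw (i + r)) (fun j => by rw [abs_abs]; exact abs_tl_le l _ j)
    have meme : (fun j => |sh i e j|) ∈ lambdaG a p :=
      mem_mono hp (he i) (fun j => by rw [abs_abs])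
    have h1 : FF a p (sh (i + r) z) ≤ FF a p ((fun j => |sh i e j|) +
        fun j => |tl l (sh (i + r) w) j|) := by
      refine FF_mono hp (mem_add_semi hp meme mema).1 fun j => ?_
      rw [Pi.add_apply, abs_of_nonneg (by positivity :
        0 ≤ |sh i e j| + |tl l (sh (i + r) w) j|)]
      by_cases hj : j < l
      · have : |z (j + i + r)| ≤ |e (j + i)| := hk (j + i) (by omega) (by omega)
        rw [add_assoc] at this
        refine le_trans this ?_
        exact le_add_of_nonneg_right (abs_nonneg _)
      · simp only [tl, hj, if_false, sh]
        exact (hzw _).trans (le_add_of_nonneg_left (abs_nonneg _))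
    have h2 := FF_add hp meme mema
    have h3 : FF a p (fun j => |tl l (sh (i + r) w) j|) < 1 / (k + 1) :=
      (FF_mono hp memt (fun j => by rw [abs_abs])).trans_lt (hT k i hi2 r hr)
    have h4 : FF a p (fun j => |sh i e j|) ≤ FF a p (sh i e) :=
      FF_mono hp (he i) (fun j => by rw [abs_abs])
    linarith
  have hc : cnt a p e (M k) ε ≤ L k + (cnt a p z (M k) δ + r) := by
    classical
    set S := (Finset.range (M k)).filter fun i => FF a p (sh i e) < ε with hS
    set G := (Finset.range (M k)).filter fun i => FF a p (sh i z) < δ with hG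
    have h1 : (S \ Finset.range (L k)).card ≤ (G ∪ Finset.Ico (M k) (M k + r)).card := by
      refine Finset.card_le_card_of_injOn (fun i => i + r) (fun i hi => ?_)
        (fun x _ y _ h => by simpa using h)
      have hi' := Finset.mem_sdiff.1 (Finset.mem_coe.1 hi)
      obtain ⟨hi1, hi2⟩ := hi'
      rw [hS, Finset.mem_filter, Finset.mem_range] at hi1
      rw [Finset.mem_range] at hi2
      have := hbig i (by omega) hi1.1 hi1.2
      refine Finset.mem_coe.2 (Finset.mem_union.2 ?_)
      beta_reduce
      by_cases h' : i + r < M k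
      · exact Or.inl (Finset.mem_filter.2 ⟨Finset.mem_range.2 h', this⟩)
      · exact Or.inr (Finset.mem_Ico.2 ⟨by omega, by omega⟩)
    have h2 : S.card ≤ (Finset.range (L k) ∪ (S \ Finset.range (L k))).card := by
      refine Finset.card_le_card fun i hi => ?_
      by_cases h : i ∈ Finset.range (L k)
      · exact Finset.mem_union_left _ h
      · exact Finset.mem_union_right _ (Finset.mem_sdiff.2 ⟨hi, h⟩)
    have h3 := Finset.card_union_le (Finset.range (L k)) (S \ Finset.range (L k))
    have h4 := Finset.card_union_le G (Finset.Ico (M k) (M k + r))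
    rw [Finset.card_range] at h3
    rw [Nat.card_Ico] at h4
    unfold cnt
    have e1 : S.card ≤ L k + (G.card + r) := by omega
    convert e1
  have hMk := hM k
  have hMR : ((k:ℝ) + 1) * (L k + k + 1) ≤ M k := by exact_mod_cast hMk
  have hMpos : (0:ℝ) < M k := lt_of_lt_of_le (by positivity) hMR
  have hcR : (cnt a p e (M k) ε : ℝ) ≤ L k + (cnt a p z (M k) δ + r) := by exact_mod_cast hc
  have hrk : (r : ℝ) ≤ k := by exact_mod_cast hr
  rw [div_le_iff₀ hMpos]
  have hzk := hz k
  rw [div_lt_iff₀ hMpos] at hzk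
  have hLM : (L k : ℝ) + r ≤ (1 / ((k:ℝ) + 1)) * M k := by
    rw [one_div, ← div_eq_inv_mul, le_div_iff₀ (by positivity)]
    nlinarith [Nat.cast_nonneg (α := ℝ) k]
  have : (1 / ((k:ℝ) + 1)) * M k ≤ η / 2 * M k := mul_le_mul_of_nonneg_right hkη.le hMpos.le
  linarith

/-! ### The coding -/

/-- coding of a 0-1 sequence `s` -/
def theta (s : ℕ → Bool) (k : ℕ) : Bool :=
  match (Nat.unpair k).1 with
  | 0 => false
  | 1 => true
  | t + 2 => s t

theorem freq_unpair (i : ℕ) : ∃ᶠ k in atTop, (Nat.unpair k).1 = i := by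
  rw [frequently_atTop]
  intro N
  exact ⟨Nat.pair i N, Nat.right_le_pair i N, by simp⟩

/-- the vector coded by `s` -/
def vec (L : ℕ → ℕ) (w : ℕ → ℝ) (s : ℕ → Bool) : ℕ → ℝ :=
  fun j => if theta s (kap L j) = true then w j else 0

theorem abs_vec_le (L : ℕ → ℕ) (w : ℕ → ℝ) (s : ℕ → Bool) (j : ℕ) : |vec L w s j| ≤ |w j| := by
  unfold vec; split_ifs <;> simp

theorem sh_sh (i m : ℕ) (x : ℕ → ℝ) : sh i (sh m x) = sh (i + m) x := by
  funext j; simp only [sh]; congr 1; omega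

/-- Main theorem: if `A` satisfies the continuity condition for the
backward shift `B` on `λ_p(A)` (`1 ≤ p < ∞` or `p = 0`) and `Φ_{x,y}(δ) = 0` for some
`x, y ∈ λ_p(A)` and `δ > 0`, then for every `0 < ε < δ` the operator `B` admits an
uncountable invariant distributionally `ε`-scrambled set. -/
theorem stmt_12 (a : ℕ → ℕ → ℝ) (p : ℝ) (hA : IsKotheMatrix a) (hp : 1 ≤ p ∨ p = 0)
    (hcont : ∀ n : ℕ, ∃ m : ℕ, n < m ∧ ∃ C : ℝ, ∀ j : ℕ, a j n ≤ C * a (j + 1) m)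
    (x y : ℕ → ℝ) (hx : x ∈ lambdaG a p) (hy : y ∈ lambdaG a p)
    (δ : ℝ) (hδ : 0 < δ) (hΦ : PhiLow (kDistG a p) bShift x y δ = 0) :
    ∀ ε : ℝ, 0 < ε → ε < δ →
      ∃ D : Set (ℕ → ℝ), D ⊆ lambdaG a p ∧ ¬ D.Countable ∧
        (∀ z ∈ D, bShift z ∈ D) ∧
        ∀ u ∈ D, ∀ v ∈ D, u ≠ v →
          (∀ t : ℝ, 0 < t → PhiUp (kDistG a p) bShift u v t = 1) ∧
          PhiLow (kDistG a p) bShift u v ε = 0 := by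
  classical
  intro ε hε hεδ
  set z : ℕ → ℝ := x - y with hzdef
  have hny : -y ∈ lambdaG a p := mem_mono hp hy (fun j => by simp)
  have hzmem : z ∈ lambdaG a p := by
    have := (mem_add_semi hp hx hny).1
    rwa [← sub_eq_add_neg] at this
  have hzfr : ∀ η > 0, ∃ᶠ n : ℕ in atTop, (cnt a p z n δ : ℝ) / n < η := by
    intro η hη
    have := Phi_freq_of_low _ _ _ _ _ hΦ η hη
    simpa only [PhiN_eq] using this
  obtain ⟨q, hq, hqm⟩ := exists_mult hp hzmem
  set w := gw z q with hwdef
  have hwmem : w ∈ lambdaG a p := mem_mono hp hqm (gw_le z q)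
  have hw : ∀ i, sh i w ∈ lambdaG a p := mem_sh hA hp hcont hwmem
  have hzw : ∀ j, |z j| ≤ |w j| := gw_ge z q
  obtain ⟨L, M, hL0, hL, hLM⟩ := build_seq hp z w hw δ hzfr
  have hM := fun k => (hLM k).1
  have hz := fun k => (hLM k).2.1
  have hT := fun k => (hLM k).2.2
  have hkap : ∀ k m j, m ≤ k → L k ≤ j → j + k < L (k + 1) → kap L (j + m) = k := by
    intro k m j h1 h2 h3
    exact kap_eq hL (by omega) (by omega)
  have hvm : ∀ s m, sh m (vec L w s) ∈ lambdaG a p := fun s m =>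
    mem_mono hp (hw m) (fun j => abs_vec_le L w s (j + m))
  have hem : ∀ s m s' n i, sh i (sh m (vec L w s) - sh n (vec L w s')) ∈ lambdaG a p := by
    intro s m s' n i
    have h1 := hvm s (i + m)
    have h2 : -sh (i + n) (vec L w s') ∈ lambdaG a p :=
      mem_mono hp (hvm s' (i + n)) (fun j => by simp)
    have h3 := (mem_add_semi hp h1 h2).1
    rw [← sub_eq_add_neg, ← sh_sh, ← sh_sh] at h3
    exact h3
  have low : ∀ s m s' n, (s ≠ s' ∨ m ≠ n) →
      PhiLow (kDistG a p) bShift (sh m (vec L w s)) (sh n (vec L w s')) ε = 0 := by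
    intro s m s' n hne
    have main : ∃ r, ∃ᶠ k in atTop, ∀ j, L k ≤ j → j + k < L (k + 1) →
        |z (j + r)| ≤ |(sh m (vec L w s) - sh n (vec L w s')) j| := by
      by_cases hs : s = s'
      · subst hs
        have hmn : m ≠ n := by tauto
        have hfr : ∃ᶠ k in atTop, theta s k = true :=
          (freq_unpair 1).mono fun k hk => by simp [theta, hk]
        refine ⟨max m n, ?_⟩
        obtain ⟨J, hJ⟩ := eventually_atTop.1 (hq.eventually_ge_atTop (m + n))
        refine (hfr.and_eventually (eventually_ge_atTop (m + n + J))).mono ?_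
        rintro k ⟨hk, hk2⟩ j hj1 hj2
        have e1 := hkap k m j (by omega) hj1 hj2
        have e2 := hkap k n j (by omega) hj1 hj2
        have hkL : k ≤ L k := hL.id_le k
        have hv : (sh m (vec L w s) - sh n (vec L w s)) j = w (j + m) - w (j + n) := by
          simp only [Pi.sub_apply, sh, vec, e1, e2, hk, if_true]
        rw [hv]
        rcases lt_or_gt_of_ne hmn with h | h
        · rw [max_eq_right h.le, abs_sub_comm]
          have h3 := (gw_spec z q (j + n)).2 (n - m) (by omega)
            (by have := hJ (j + n) (by omega); omega) (by omega)
          rwa [show j + n - (n - m) = j + m by omega] at h3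
        · rw [max_eq_left h.le]
          have h3 := (gw_spec z q (j + m)).2 (m - n) (by omega)
            (by have := hJ (j + m) (by omega); omega) (by omega)
          rwa [show j + m - (m - n) = j + n by omega] at h3
      · obtain ⟨t, ht⟩ := Function.ne_iff.1 hs
        have hth : ∀ s : ℕ → Bool, ∀ k, (Nat.unpair k).1 = t + 2 → theta s k = s t := by
          intro s k hk
          simp [theta, hk]
        cases hst : s t
        · have hst' : s' t = true := by
            cases h : s' t
            · rw [hst, h] at ht; exact absurd rfl ht
            · rfl
          refine ⟨n, ((freq_unpair (t + 2)).and_eventually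
            (eventually_ge_atTop (m + n))).mono ?_⟩
          rintro k ⟨hk, hk2⟩ j hj1 hj2
          have e1 := hkap k m j (by omega) hj1 hj2
          have e2 := hkap k n j (by omega) hj1 hj2
          have hv : (sh m (vec L w s) - sh n (vec L w s')) j = - w (j + n) := by
            simp [sh, vec, e1, e2, hth _ k hk, hst, hst']
          rw [hv, abs_neg]
          exact hzw _
        · have hst' : s' t = false := by
            cases h : s' t
            · rfl
            · rw [hst, h] at ht; exact absurd rfl ht
          refine ⟨m, ((freq_unpair (t + 2)).and_eventually
            (eventually_ge_atTop (m + n))).mono ?_⟩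
          rintro k ⟨hk, hk2⟩ j hj1 hj2
          have e1 := hkap k m j (by omega) hj1 hj2
          have e2 := hkap k n j (by omega) hj1 hj2
          have hv : (sh m (vec L w s) - sh n (vec L w s')) j = w (j + m) := by
            simp [sh, vec, e1, e2, hth _ k hk, hst, hst']
          rw [hv]
          exact hzw _
    obtain ⟨r, hr⟩ := main
    refine PhiLow_eq_zero _ _ _ _ _ fun η hη => ?_
    simp only [PhiN_eq]
    exact low_lemma hp z w hw δ L M hM hz hT hzw _ (hem s m s' n) r hr ε hεδ η hη
  have up : ∀ s m s' n t, 0 < t →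
      PhiUp (kDistG a p) bShift (sh m (vec L w s)) (sh n (vec L w s')) t = 1 := by
    intro s m s' n t ht
    refine PhiUp_eq_one _ _ _ _ _ fun η hη => ?_
    simp only [PhiN_eq]
    refine up_lemma hp w hw L M hM hT _ m n (fun j => ?_) ?_ t ht η hη
    · exact (abs_sub _ _).trans (add_le_add (abs_vec_le L w s (j + m)) (abs_vec_le L w s' (j + n)))
    · refine ((freq_unpair 0).and_eventually (eventually_ge_atTop (m + n))).mono ?_
      rintro k ⟨hk, hk2⟩ j hj1 hj2
      have e1 := hkap k m j (by omega) hj1 hj2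
      have e2 := hkap k n j (by omega) hj1 hj2
      simp [sh, vec, e1, e2, theta, hk]
  have hinj : Function.Injective (vec L w) := by
    intro s s' hss
    by_contra hne
    have h1 := low s 0 s' 0 (Or.inl hne)
    rw [hss] at h1
    obtain ⟨n, hn1, hn2⟩ := ((Phi_freq_of_low _ _ _ _ _ h1 1 one_pos).and_eventually
      (eventually_ge_atTop 1)).exists
    rw [PhiN_eq, sub_self] at hn1
    have hc : cnt a p 0 n ε = n := by
      unfold cnt
      have e0 : ∀ i, sh i (0 : ℕ → ℝ) = 0 := fun i => rfl
      simp only [e0, FF_zero hp hx, hε]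
      simp
    have hn0 : (n : ℝ) ≠ 0 := by
      have : n ≠ 0 := by omega
      exact_mod_cast this
    rw [hc, div_self hn0] at hn1
    exact lt_irrefl _ hn1
  refine ⟨{u | ∃ s m, u = sh m (vec L w s)}, ?_, ?_, ?_, ?_⟩
  · rintro u ⟨s, m, rfl⟩
    exact hvm s m
  · intro hcount
    have h1 : (Set.range (vec L w)).Countable := by
      refine hcount.mono ?_
      rintro _ ⟨s, rfl⟩
      exact ⟨s, 0, rfl⟩
    have h2 : Countable (ℕ → Bool) := by
      have h3 := Set.countable_univ_iff.1
        (Set.countable_of_injective_of_countable_image (s := Set.univ) hinj.injOn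
          (by rwa [Set.image_univ]))
      exact h3
    obtain ⟨f, hf⟩ := exists_surjective_nat (ℕ → Bool)
    obtain ⟨n, hn⟩ := hf fun i => !(f i i)
    have := congrFun hn n
    simp at this
  · rintro u ⟨s, m, rfl⟩
    exact ⟨s, 1 + m, (sh_sh 1 m _)⟩
  · rintro u ⟨s, m, rfl⟩ v ⟨s', n, rfl⟩ huv
    refine ⟨fun t ht => up s m s' n t ht, low s m s' n ?_⟩
    by_contra hcon
    push Not at hcon
    obtain ⟨rfl, rfl⟩ := hcon
    exact huv rfl
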